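/- Let φ be a traveling wave with speed ℓ. Then there exist K > 0, δ_0 > 0 and r_0 > 0 with the following property: if ξ_0^−, ξ_0^+ ∈ ℝ, 0 ≤ β_0 ≤ δ_0, and (w_n)_{n≥0} is a sequence of bounded measurable functions satisfying w_{n+1}(x) = g((q * w_n)(x)) for all n and x, with φ(x + ξ_0^−) − β_0 ≤ w_0(x) ≤ φ(x + ξ_0^+) + β_0 for all x ∈ ℝ, then for all n ≥ 1 and all x ∈ ℝ: φ(x − nℓ + ξ_n^−) − β_n ≤ w_n(x) ≤ φ(x − nℓ + ξ_n^+) + β_n, where β_n = β_0 e^{−r_0 n}, ξ_n^− = ξ_0^− − K β_0 (1 − e^{−r_0 n}), and ξ_n^+ = ξ_0^+ + K β_0 (1 − e^{−r_0 n}). -/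

import Mathlib

open MeasureTheory Filter Topology

/-- Convolution `(q * u)(x) = ∫ q(y) u(x - y) dy`. -/
noncomputable def conv (q u : ℝ → ℝ) (x : ℝ) : ℝ := ∫ y : ℝ, q y * u (x - y)

/-- The shifted kernel `q_ℓ(x) = q(x + ℓ)`. -/
def qshift (q : ℝ → ℝ) (ℓ : ℝ) (x : ℝ) : ℝ := q (x + ℓ)

/-- The bistable setting: a `C¹` compactly supported probability density `q`, and a
polynomial `P` (the recursion polynomial, i.e. `g` on `[0,1]`) with `P(0) = 0`, `P(1) = 1`,
`0 < P < 1` and `P' > 0` on `(0,1)`; the nonlinearity `f(x) = P(x) - x` has a unique zero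
`θ ∈ (0,1)` and `f'(0) < 0`, `f'(1) < 0` (equivalently `P'(0) < 1`, `P'(1) < 1`). -/
structure BistableSetting where
  q : ℝ → ℝ
  P : Polynomial ℝ
  θ : ℝ
  hq_diff : ContDiff ℝ 1 q
  hq_supp : HasCompactSupport q
  hq_nonneg : ∀ x, 0 ≤ q x
  hq_int : ∫ x : ℝ, q x = 1
  hP0 : P.eval 0 = 0
  hP1 : P.eval 1 = 1
  hP_range : ∀ x ∈ Set.Ioo (0 : ℝ) 1, 0 < P.eval x ∧ P.eval x < 1
  hP_mono : ∀ x ∈ Set.Ioo (0 : ℝ) 1, 0 < (Polynomial.derivative P).eval x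
  hθ_mem : θ ∈ Set.Ioo (0 : ℝ) 1
  hθ_zero : P.eval θ = θ
  hθ_unique : ∀ x ∈ Set.Ioo (0 : ℝ) 1, P.eval x = x → x = θ
  hf'0 : (Polynomial.derivative P).eval 0 < 1
  hf'1 : (Polynomial.derivative P).eval 1 < 1

/-- The nonlinearity `g`, equal to the polynomial `P` on `[0,1]` and extended linearly:
`g(x) = x + f'(0)·x` for `x < 0` and `g(x) = x + f'(1)(x-1)` for `x > 1`. -/
noncomputable def BistableSetting.g (S : BistableSetting) (x : ℝ) : ℝ :=
  if x < 0 then (Polynomial.derivative S.P).eval 0 * x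
  else if x ≤ 1 then S.P.eval x
  else 1 + (Polynomial.derivative S.P).eval 1 * (x - 1)

/-- A traveling wave with speed `ℓ`: a nondecreasing `C¹` function `φ` with
`φ = g(q_ℓ * φ)`, `φ(-∞) = 0` and `φ(+∞) = 1`. -/
structure IsTravelingWave (S : BistableSetting) (ℓ : ℝ) (φ : ℝ → ℝ) : Prop where
  mono : Monotone φ
  smooth : ContDiff ℝ 1 φ
  wave_eq : ∀ x, φ x = S.g (conv (qshift S.q ℓ) φ x)
  limit_bot : Tendsto φ atBot (𝓝 0)
  limit_top : Tendsto φ atTop (𝓝 1)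

/-!
Everything follows from a one-parameter family of barriers. For a front `φ = g (k * φ)`, the defect
`β ↦ φ (y + κ β) + ρ β - g ((k * φ) y + β)` vanishes at `β = 0`, and for suitable `κ` and `ρ < 1` it
is nondecreasing on a neighbourhood of `0` that does not depend on `y`. Indeed its derivative is
`κ φ' (y + κ β) + ρ - g' ((k * φ) y + β)`: near `±∞` the last term is less than `ρ`, by stability
of `0` and `1`, while on compact sets `κ φ'` dominates it, since `φ' > 0`. So perturbing the front
by `β` and applying the recursion once leaves at most an error `ρ β`, at the price of a shift by
`κ β`; the shifts add up to a geometric series.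

Strict monotonicity of the front is a strong maximum principle: the zeros of a nonnegative function
with `u x = 0 → (k * u) x = 0` are stable under translations by a set that is open and, as a front
with both end states stable needs dispersal in both directions, contains numbers of either sign.
-/

open Set

section Calculus

variable {𝕜 E : Type*} [NontriviallyNormedField 𝕜] [NormedAddCommGroup E] [NormedSpace 𝕜 E]
  {p : 𝕜 → Prop} [DecidablePred p] {f f' g g' : 𝕜 → E}

theorem hasDerivWithinAt_closure_of_eqOn {u u' : 𝕜 → E} {s : Set 𝕜} (hu : EqOn u f (closure s))
    (hu' : EqOn u' f' (closure s)) (hf : ∀ x, HasDerivAt f (f' x) x) (x : 𝕜) :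
    HasDerivWithinAt u (u' x) (closure s) x := by
  by_cases hx : x ∈ closure s
  · rw [hu' hx]
    exact (hf x).hasDerivWithinAt.congr hu (hu hx)
  · exact HasFDerivWithinAt.of_notMem_closure (by rwa [closure_closure])

theorem hasDerivAt_ite (hf : ∀ x, HasDerivAt f (f' x) x) (hg : ∀ x, HasDerivAt g (g' x) x)
    (hfg : ∀ x ∈ frontier {x | p x}, f x = g x) (hfg' : ∀ x ∈ frontier {x | p x}, f' x = g' x)
    (x : 𝕜) : HasDerivAt (fun x ↦ if p x then f x else g x) (if p x then f' x else g' x) x := by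
  have eqOn_left {u v : 𝕜 → E} (huv : ∀ x ∈ frontier {x | p x}, u x = v x) :
      EqOn (fun x ↦ if p x then u x else v x) u (closure {x | p x}) := fun y hy ↦ by
    by_cases hpy : p y
    · exact if_pos hpy
    · exact (if_neg hpy).trans (huv y ⟨hy, fun h ↦ hpy (interior_subset h)⟩).symm
  have eqOn_right {u v : 𝕜 → E} (huv : ∀ x ∈ frontier {x | p x}, u x = v x) :
      EqOn (fun x ↦ if p x then u x else v x) v (closure {x | p x}ᶜ) := fun y hy ↦ by
    by_cases hpy : p y
    · refine (if_pos hpy).trans (huv y ⟨subset_closure hpy, ?_⟩)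
      rwa [closure_compl] at hy
    · exact if_neg hpy
  have hunion : closure {x | p x} ∪ closure {x | p x}ᶜ = univ :=
    eq_univ_of_forall fun y ↦ (em (p y)).imp (fun h ↦ subset_closure h) fun h ↦ subset_closure h
  rw [← hasDerivWithinAt_univ, ← hunion]
  exact (hasDerivWithinAt_closure_of_eqOn (eqOn_left hfg) (eqOn_left hfg') hf x).union
    (hasDerivWithinAt_closure_of_eqOn (eqOn_right hfg) (eqOn_right hfg') hg x)

end Calculus

section Submonoid

theorem addSubmonoid_eq_top_of_mem_nhds_zero {E : Type*} [AddCommGroup E] [Module ℝ E]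
    [TopologicalSpace E] [ContinuousSMul ℝ E] {M : AddSubmonoid E} (hM : (M : Set E) ∈ 𝓝 0) :
    M = ⊤ := by
  refine eq_top_iff.2 fun t _ ↦ ?_
  have hlim : Tendsto (fun n : ℕ ↦ (n : ℝ)⁻¹ • t) atTop (𝓝 ((0 : ℝ) • t)) :=
    tendsto_inv_atTop_nhds_zero_nat.smul_const t
  rw [zero_smul] at hlim
  obtain ⟨n, hn, hn0⟩ := ((hlim.eventually_mem hM).and (eventually_ne_atTop 0)).exists
  have := M.nsmul_mem hn n
  rwa [← Nat.cast_smul_eq_nsmul ℝ, smul_inv_smul₀ (Nat.cast_ne_zero.2 hn0)] at this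

theorem addSubmonoid_eq_top_of_mem_interior {M : AddSubmonoid ℝ} {a b : ℝ}
    (ha : a ∈ interior (M : Set ℝ)) (ha0 : 0 < a) (hb : b ∈ M) (hb0 : b < 0) : M = ⊤ := by
  -- Perturb `a` so that it becomes commensurable with `b`; some `m a + n b` is then zero.
  obtain ⟨r, hrM, hr0⟩ : ∃ r : ℚ, -b * r ∈ interior (M : Set ℝ) ∧ 0 < (r : ℝ) := by
    have hopen : IsOpen {r : ℝ | -b * r ∈ interior (M : Set ℝ) ∧ 0 < r} :=
      (isOpen_interior.preimage (by fun_prop)).inter (isOpen_lt continuous_const continuous_id)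
    refine Rat.denseRange_cast.exists_mem_open hopen ⟨a / -b, ?_, div_pos ha0 (neg_pos.2 hb0)⟩
    rwa [mul_div_cancel₀ _ (neg_pos.2 hb0).ne']
  obtain ⟨n, hn⟩ := Int.eq_ofNat_of_zero_le (Rat.num_nonneg.2 (Rat.cast_pos.1 hr0).le)
  have hden : (r.den : ℝ) ≠ 0 := Nat.cast_ne_zero.2 r.den_nz
  have hr : (r : ℝ) = n / r.den := by rw [Rat.cast_def, hn, Int.cast_natCast]
  have hM : ∀ᶠ y in 𝓝 (0 : ℝ), (y - n * b) / r.den ∈ (M : Set ℝ) := by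
    have hcont : ContinuousAt (fun y : ℝ ↦ (y - n * b) / r.den) 0 := by fun_prop
    have hzero : (0 - n * b) / r.den = -b * r := by rw [hr]; ring
    exact hcont.eventually_mem (hzero ▸ mem_interior_iff_mem_nhds.1 hrM)
  refine addSubmonoid_eq_top_of_mem_nhds_zero (hM.mono fun y hy ↦ ?_)
  have := M.add_mem (M.nsmul_mem hy r.den) (M.nsmul_mem hb n)
  rwa [nsmul_eq_mul, nsmul_eq_mul, mul_div_cancel₀ _ hden, sub_add_cancel] at this

end Submonoid

section Kernel

/-- A dispersal kernel: a continuous, compactly supported probability density on `ℝ`. -/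
structure IsDispersalKernel (k : ℝ → ℝ) : Prop where
  continuous : Continuous k
  hasCompactSupport : HasCompactSupport k
  nonneg : ∀ x, 0 ≤ k x
  integral_eq_one : ∫ x, k x = 1

theorem conv_qshift (q u : ℝ → ℝ) (ℓ x : ℝ) : conv (qshift q ℓ) u x = conv q u (x + ℓ) := by
  unfold conv qshift
  rw [← integral_add_right_eq_self (fun y ↦ q y * u (x + ℓ - y)) ℓ]
  simp only [add_sub_add_right_eq_sub]

theorem conv_comp_add_right (q u : ℝ → ℝ) (a x : ℝ) :
    conv q (fun y ↦ u (y + a)) x = conv q u (x + a) := by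
  simp only [conv, sub_add_eq_add_sub]

namespace IsDispersalKernel

variable {k u v : ℝ → ℝ} {C D x : ℝ}

protected theorem qshift (hk : IsDispersalKernel k) (ℓ : ℝ) : IsDispersalKernel (qshift k ℓ) where
  continuous := hk.continuous.comp (continuous_add_const ℓ)
  hasCompactSupport := hk.hasCompactSupport.comp_homeomorph (Homeomorph.addRight ℓ)
  nonneg _ := hk.nonneg _
  integral_eq_one := (integral_add_right_eq_self k ℓ).trans hk.integral_eq_one

theorem integrable (hk : IsDispersalKernel k) : Integrable k :=
  hk.continuous.integrable_of_hasCompactSupport hk.hasCompactSupport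

theorem integrable_mul (hk : IsDispersalKernel k) (hu : Measurable u) (hC : ∀ y, |u y| ≤ C)
    (x : ℝ) : Integrable fun y ↦ k y * u (x - y) :=
  hk.integrable.mul_bdd (hu.comp (measurable_const.sub measurable_id)).aestronglyMeasurable
    (Eventually.of_forall fun y ↦ hC (x - y))

theorem conv_const (hk : IsDispersalKernel k) (c x : ℝ) : conv k (fun _ ↦ c) x = c := by
  rw [conv, integral_mul_const, hk.integral_eq_one, one_mul]

theorem conv_add_const (hk : IsDispersalKernel k) (hu : Measurable u) (hC : ∀ y, |u y| ≤ C)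
    (c x : ℝ) : conv k (fun y ↦ u y + c) x = conv k u x + c := by
  simp only [conv, mul_add]
  rw [integral_add (hk.integrable_mul hu hC x) (hk.integrable.mul_const c), integral_mul_const,
    hk.integral_eq_one, one_mul]

theorem conv_const_sub (hk : IsDispersalKernel k) (hu : Measurable u) (hC : ∀ y, |u y| ≤ C)
    (c x : ℝ) : conv k (fun y ↦ c - u y) x = c - conv k u x := by
  simp only [conv, mul_sub]
  rw [integral_sub (hk.integrable.mul_const c) (hk.integrable_mul hu hC x), integral_mul_const,
    hk.integral_eq_one, one_mul]

theorem conv_le_conv (hk : IsDispersalKernel k) (hu : Measurable u) (hv : Measurable v)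
    (hC : ∀ y, |u y| ≤ C) (hD : ∀ y, |v y| ≤ D) (huv : ∀ y, 0 < k y → u (x - y) ≤ v (x - y)) :
    conv k u x ≤ conv k v x := by
  refine integral_mono (hk.integrable_mul hu hC x) (hk.integrable_mul hv hD x) fun y ↦ ?_
  rcases (hk.nonneg y).eq_or_lt with hy | hy
  · simp only [← hy, zero_mul, le_refl]
  · exact mul_le_mul_of_nonneg_left (huv y hy) hy.le

theorem conv_le (hk : IsDispersalKernel k) (hu : Measurable u) (hC : ∀ y, |u y| ≤ C) {c : ℝ}
    (h : ∀ y, 0 < k y → u (x - y) ≤ c) : conv k u x ≤ c :=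
  (hk.conv_le_conv hu measurable_const hC (fun _ ↦ le_refl |c|) h).trans_eq (hk.conv_const c x)

theorem le_conv (hk : IsDispersalKernel k) (hu : Measurable u) (hC : ∀ y, |u y| ≤ C) {c : ℝ}
    (h : ∀ y, 0 < k y → c ≤ u (x - y)) : c ≤ conv k u x :=
  (hk.conv_const c x).symm.trans_le
    (hk.conv_le_conv measurable_const hu (fun _ ↦ le_refl |c|) hC h)

theorem tendsto_conv (hk : IsDispersalKernel k) (hu : Measurable u) (hC : ∀ y, |u y| ≤ C)
    {l : Filter ℝ} [l.IsCountablyGenerated] {c : ℝ}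
    (h : ∀ y, Tendsto (fun x ↦ u (x - y)) l (𝓝 c)) : Tendsto (conv k u) l (𝓝 c) := by
  rw [← hk.conv_const c 0]
  refine tendsto_integral_filter_of_dominated_convergence (fun y ↦ |k y| * C)
    (Eventually.of_forall fun x ↦ (hk.integrable_mul hu hC x).aestronglyMeasurable)
    (Eventually.of_forall fun x ↦ Eventually.of_forall fun y ↦ ?_)
    (hk.integrable.abs.mul_const C) (Eventually.of_forall fun y ↦ (h y).const_mul (k y))
  rw [norm_mul]
  exact mul_le_mul_of_nonneg_left (hC _) (abs_nonneg _)

theorem hasDerivAt_conv (hk : IsDispersalKernel k) (hu : ContDiff ℝ 1 u) (x : ℝ) :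
    HasDerivAt (conv k u) (conv k (deriv u) x) x := by
  have hk' : Continuous k := hk.continuous
  have hu₀ : Continuous u := hu.continuous
  obtain ⟨C, hC⟩ := ((isCompact_closedBall x 1).prod
    hk.hasCompactSupport.isCompact).exists_bound_of_continuousOn
      (f := fun p : ℝ × ℝ ↦ deriv u (p.1 - p.2)) (by fun_prop)
  have hbound (y z : ℝ) (hz : z ∈ Metric.closedBall x 1) :
      ‖k y * deriv u (z - y)‖ ≤ |k y| * C := by
    by_cases hy : k y = 0
    · simp only [hy, zero_mul, norm_zero, abs_zero, le_refl]
    · rw [norm_mul]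
      exact mul_le_mul_of_nonneg_left (hC (z, y) ⟨hz, subset_tsupport k hy⟩) (abs_nonneg _)
  have hderiv (y z : ℝ) : HasDerivAt (fun z ↦ k y * u (z - y)) (k y * deriv u (z - y)) z :=
    ((hu.differentiable one_ne_zero _).hasDerivAt.comp_sub_const z y).const_mul (k y)
  have hint : Integrable fun y ↦ k y * u (x - y) :=
    Continuous.integrable_of_hasCompactSupport (by fun_prop) hk.hasCompactSupport.mul_right
  exact (hasDerivAt_integral_of_dominated_loc_of_deriv_le (Metric.closedBall_mem_nhds x one_pos)
    (Eventually.of_forall fun z ↦ Continuous.aestronglyMeasurable (by fun_prop)) hint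
    (Continuous.aestronglyMeasurable (by fun_prop)) (Eventually.of_forall hbound)
    (hk.integrable.abs.mul_const C) (Eventually.of_forall fun y z _ ↦ hderiv y z)).2

theorem eq_zero_of_conv_eq_zero (hk : IsDispersalKernel k) (hu : Continuous u)
    (hu0 : ∀ y, 0 ≤ u y) (hx : conv k u x = 0) {y : ℝ} (hy : 0 < k y) : u (x - y) = 0 := by
  by_contra hne
  have hk' : Continuous k := hk.continuous
  have : 0 < conv k u x := Continuous.integral_pos_of_hasCompactSupport_nonneg_nonzero (x := y)
    (f := fun y ↦ k y * u (x - y)) (by fun_prop) hk.hasCompactSupport.mul_right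
    (fun y ↦ mul_nonneg (hk.nonneg y) (hu0 _)) (mul_ne_zero hy.ne' hne)
  exact this.ne' hx

theorem strong_maximum_principle (hk : IsDispersalKernel k) (hneg : ∃ y < 0, 0 < k y)
    (hpos : ∃ y > 0, 0 < k y) (hu : Continuous u) (hu0 : ∀ y, 0 ≤ u y)
    (hconv : ∀ y, u y = 0 → conv k u y = 0) (hx : u x = 0) (y : ℝ) : u y = 0 := by
  let M : AddSubmonoid ℝ :=
    { carrier := {t | ∀ z, u z = 0 → u (z + t) = 0}
      zero_mem' := fun z hz ↦ by rwa [add_zero]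
      add_mem' := fun {s t} hs ht z hz ↦ by rw [← add_assoc]; exact ht _ (hs _ hz) }
  have hM {t : ℝ} (ht : 0 < k (-t)) : t ∈ M := fun z hz ↦ by
    rw [← sub_neg_eq_add]
    exact hk.eq_zero_of_conv_eq_zero hu hu0 (hconv z hz) ht
  obtain ⟨p, hp, hkp⟩ := hneg
  obtain ⟨s, hs, hks⟩ := hpos
  have hint : -p ∈ interior (M : Set ℝ) :=
    interior_maximal (fun t (ht : 0 < k (-t)) ↦ hM ht)
      (isOpen_lt continuous_const (hk.continuous.comp continuous_neg))
      (show 0 < k (- -p) by rwa [neg_neg])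
  have htop : M = ⊤ := addSubmonoid_eq_top_of_mem_interior hint (neg_pos.2 hp)
    (hM (t := -s) (by rwa [neg_neg])) (neg_lt_zero.2 hs)
  have hxy : y - x ∈ M := htop ▸ AddSubmonoid.mem_top _
  rw [← add_sub_cancel x y]
  exact hxy x hx

end IsDispersalKernel

end Kernel

section Reaction

/-- A reaction function with stable end states: a nondecreasing `C¹` function with positive
derivative on `(0, 1)`, for which `0` and `1` are attracting fixed points. Nothing is assumed about
its fixed points in `(0, 1)`, so the bistable nonlinearities are a special case. -/
structure IsStableReaction (g : ℝ → ℝ) : Prop where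
  contDiff : ContDiff ℝ 1 g
  monotone : Monotone g
  map_zero : g 0 = 0
  map_one : g 1 = 1
  deriv_pos : ∀ s ∈ Ioo (0 : ℝ) 1, 0 < deriv g s
  deriv_zero_lt_one : deriv g 0 < 1
  deriv_one_lt_one : deriv g 1 < 1

namespace IsStableReaction

variable {g : ℝ → ℝ}

theorem hasDerivAt (hg : IsStableReaction g) (s : ℝ) : HasDerivAt g (deriv g s) s :=
  (hg.contDiff.differentiable one_ne_zero s).hasDerivAt

theorem continuous_deriv (hg : IsStableReaction g) : Continuous (deriv g) :=
  hg.contDiff.continuous_deriv le_rfl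

theorem strictMonoOn (hg : IsStableReaction g) : StrictMonoOn g (Icc 0 1) :=
  strictMonoOn_of_deriv_pos (convex_Icc 0 1) hg.contDiff.continuous.continuousOn fun s hs ↦
    hg.deriv_pos s (by rwa [interior_Icc] at hs)

theorem eventually_lt_self (hg : IsStableReaction g) : ∀ᶠ s in 𝓝[>] 0, g s < s := by
  filter_upwards [(hg.hasDerivAt 0).hasDerivWithinAt.limsup_slope_le' self_notMem_Ioi
    hg.deriv_zero_lt_one, self_mem_nhdsWithin] with s hslope (hs : 0 < s)
  rwa [slope_def_field, hg.map_zero, sub_zero, sub_zero, div_lt_one hs] at hslope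

theorem eventually_self_lt (hg : IsStableReaction g) : ∀ᶠ s in 𝓝[<] 1, s < g s := by
  filter_upwards [(hg.hasDerivAt 1).hasDerivWithinAt.limsup_slope_le' self_notMem_Iio
    hg.deriv_one_lt_one, self_mem_nhdsWithin] with s hslope (hs : s < 1)
  rw [slope_def_field, hg.map_one, div_lt_one_of_neg (sub_neg.2 hs)] at hslope
  exact (sub_lt_sub_iff_right 1).1 hslope

end IsStableReaction

end Reaction

section Front

/-- A stationary front for the recursion `w ↦ g (k * w)`, connecting `0` at `-∞` to `1` at `+∞`.
A traveling wave with speed `ℓ` for the kernel `q` is a stationary front for `qshift q ℓ`. -/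
structure IsFront (k g φ : ℝ → ℝ) : Prop where
  monotone : Monotone φ
  contDiff : ContDiff ℝ 1 φ
  eq_conv : ∀ x, φ x = g (conv k φ x)
  tendsto_atBot : Tendsto φ atBot (𝓝 0)
  tendsto_atTop : Tendsto φ atTop (𝓝 1)

namespace IsFront

variable {k g φ : ℝ → ℝ}

theorem continuous (hφ : IsFront k g φ) : Continuous φ := hφ.contDiff.continuous

theorem measurable (hφ : IsFront k g φ) : Measurable φ := hφ.continuous.measurable

theorem hasDerivAt (hφ : IsFront k g φ) (x : ℝ) : HasDerivAt φ (deriv φ x) x :=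
  (hφ.contDiff.differentiable one_ne_zero x).hasDerivAt

theorem mem_Icc (hφ : IsFront k g φ) (x : ℝ) : φ x ∈ Icc 0 1 :=
  ⟨hφ.monotone.le_of_tendsto hφ.tendsto_atBot x, hφ.monotone.ge_of_tendsto hφ.tendsto_atTop x⟩

theorem abs_le_one (hφ : IsFront k g φ) (x : ℝ) : |φ x| ≤ 1 :=
  abs_le.2 ⟨neg_one_lt_zero.le.trans (hφ.mem_Icc x).1, (hφ.mem_Icc x).2⟩

theorem Ioo_subset_range (hφ : IsFront k g φ) : Ioo 0 1 ⊆ range φ := fun _ hs ↦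
  have ⟨x, hx⟩ := (hφ.tendsto_atBot.eventually_le_const hs.1).exists
  have ⟨y, hy⟩ := (hφ.tendsto_atTop.eventually_const_le hs.2).exists
  mem_range_of_exists_le_of_exists_ge hφ.continuous ⟨x, hx⟩ ⟨y, hy⟩

theorem not_forall_eq (hφ : IsFront k g φ) (c : ℝ) : ¬ ∀ x, φ x = c := fun h ↦ by
  rw [← funext_iff] at h
  exact zero_ne_one ((tendsto_nhds_unique hφ.tendsto_atBot (h ▸ tendsto_const_nhds)).trans
    (tendsto_nhds_unique hφ.tendsto_atTop (h ▸ tendsto_const_nhds)).symm)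

theorem conv_mem_Icc (hφ : IsFront k g φ) (hk : IsDispersalKernel k) (x : ℝ) :
    conv k φ x ∈ Icc 0 1 :=
  ⟨hk.le_conv hφ.measurable hφ.abs_le_one fun _ _ ↦ (hφ.mem_Icc _).1,
    hk.conv_le hφ.measurable hφ.abs_le_one fun _ _ ↦ (hφ.mem_Icc _).2⟩

theorem exists_neg_kernel_pos (hφ : IsFront k g φ) (hk : IsDispersalKernel k)
    (hg : IsStableReaction g) : ∃ y < 0, 0 < k y := by
  by_contra! hk0
  obtain ⟨s, hgs, hs⟩ := (hg.eventually_lt_self.and (Ioo_mem_nhdsGT one_pos)).exists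
  obtain ⟨x, rfl⟩ := hφ.Ioo_subset_range hs
  have hconv : conv k φ x ≤ φ x := hk.conv_le hφ.measurable hφ.abs_le_one fun y hy ↦
    hφ.monotone (sub_le_self x (not_lt.1 fun hy0 ↦ (hk0 y hy0).not_gt hy))
  exact ((hφ.eq_conv x).trans_le (hg.monotone hconv)).not_gt hgs

theorem exists_pos_kernel_pos (hφ : IsFront k g φ) (hk : IsDispersalKernel k)
    (hg : IsStableReaction g) : ∃ y > 0, 0 < k y := by
  by_contra! hk0
  obtain ⟨s, hgs, hs⟩ := (hg.eventually_self_lt.and (Ioo_mem_nhdsLT one_pos)).exists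
  obtain ⟨x, rfl⟩ := hφ.Ioo_subset_range hs
  have hconv : φ x ≤ conv k φ x := hk.le_conv hφ.measurable hφ.abs_le_one fun y hy ↦
    hφ.monotone (le_sub_self_iff x |>.2 (not_lt.1 fun hy0 ↦ (hk0 y hy0).not_gt hy))
  exact ((hg.monotone hconv).trans_eq (hφ.eq_conv x).symm).not_gt hgs

theorem pos (hφ : IsFront k g φ) (hk : IsDispersalKernel k) (hg : IsStableReaction g) (x : ℝ) :
    0 < φ x := by
  refine (hφ.mem_Icc x).1.lt_of_ne' fun hx ↦ hφ.not_forall_eq 0 ?_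
  refine hk.strong_maximum_principle (hφ.exists_neg_kernel_pos hk hg)
    (hφ.exists_pos_kernel_pos hk hg) hφ.continuous (fun y ↦ (hφ.mem_Icc y).1) (fun y hy ↦ ?_) hx
  refine hg.strictMonoOn.injOn (hφ.conv_mem_Icc hk y) (left_mem_Icc.2 zero_le_one) ?_
  rw [← hφ.eq_conv, hy, hg.map_zero]

theorem lt_one (hφ : IsFront k g φ) (hk : IsDispersalKernel k) (hg : IsStableReaction g)
    (x : ℝ) : φ x < 1 := by
  refine (hφ.mem_Icc x).2.lt_of_ne fun hx ↦ hφ.not_forall_eq 1 fun y ↦ ?_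
  refine (sub_eq_zero.1 <| hk.strong_maximum_principle (u := fun y ↦ 1 - φ y)
    (hφ.exists_neg_kernel_pos hk hg) (hφ.exists_pos_kernel_pos hk hg)
    (continuous_const.sub hφ.continuous) (fun y ↦ sub_nonneg.2 (hφ.mem_Icc y).2)
    (fun y hy ↦ ?_) (sub_eq_zero.2 hx.symm) y).symm
  rw [hk.conv_const_sub hφ.measurable hφ.abs_le_one, sub_eq_zero]
  refine hg.strictMonoOn.injOn (right_mem_Icc.2 zero_le_one) (hφ.conv_mem_Icc hk y) ?_
  rw [← hφ.eq_conv, hg.map_one, sub_eq_zero.1 hy]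

theorem conv_mem_Ioo (hφ : IsFront k g φ) (hk : IsDispersalKernel k) (hg : IsStableReaction g)
    (x : ℝ) : conv k φ x ∈ Ioo 0 1 := by
  refine ⟨(hφ.conv_mem_Icc hk x).1.lt_of_ne' fun h ↦ (hφ.pos hk hg x).ne' ?_,
    (hφ.conv_mem_Icc hk x).2.lt_of_ne fun h ↦ (hφ.lt_one hk hg x).ne ?_⟩
  · rw [hφ.eq_conv, h, hg.map_zero]
  · rw [hφ.eq_conv, h, hg.map_one]

theorem deriv_eq (hφ : IsFront k g φ) (hk : IsDispersalKernel k) (hg : IsStableReaction g)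
    (x : ℝ) : deriv φ x = deriv g (conv k φ x) * conv k (deriv φ) x := by
  have hcomp : φ = g ∘ conv k φ := funext hφ.eq_conv
  conv_lhs => rw [hcomp]
  exact ((hg.hasDerivAt _).comp x (hk.hasDerivAt_conv hφ.contDiff x)).deriv

theorem deriv_pos (hφ : IsFront k g φ) (hk : IsDispersalKernel k) (hg : IsStableReaction g)
    (x : ℝ) : 0 < deriv φ x := by
  refine hφ.monotone.deriv_nonneg.lt_of_ne' fun hx ↦ hφ.not_forall_eq (φ x) fun y ↦ ?_
  refine is_const_of_deriv_eq_zero (hφ.contDiff.differentiable one_ne_zero) ?_ y x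
  refine hk.strong_maximum_principle (hφ.exists_neg_kernel_pos hk hg)
    (hφ.exists_pos_kernel_pos hk hg) (hφ.contDiff.continuous_deriv le_rfl)
    (fun _ ↦ hφ.monotone.deriv_nonneg) (fun y hy ↦ ?_) hx
  rw [hφ.deriv_eq hk hg] at hy
  exact (mul_eq_zero.1 hy).resolve_left (hg.deriv_pos _ (hφ.conv_mem_Ioo hk hg y)).ne'

theorem eventually_deriv_reaction_lt (hφ : IsFront k g φ) (hk : IsDispersalKernel k)
    (hg : IsStableReaction g) {ρ : ℝ} (h0 : deriv g 0 < ρ) (h1 : deriv g 1 < ρ) :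
    ∀ᶠ p : ℝ × ℝ in cocompact ℝ ×ˢ 𝓝 0, deriv g (conv k φ p.1 + p.2) < ρ := by
  have near {l : Filter ℝ} {c : ℝ} (hl : Tendsto (conv k φ) l (𝓝 c)) (hc : deriv g c < ρ) :
      ∀ᶠ p : ℝ × ℝ in l ×ˢ 𝓝 0, deriv g (conv k φ p.1 + p.2) < ρ := by
    have hadd : Tendsto (fun p : ℝ × ℝ ↦ conv k φ p.1 + p.2) (l ×ˢ 𝓝 0) (𝓝 (c + 0)) :=
      (hl.comp tendsto_fst).add tendsto_snd
    rw [add_zero] at hadd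
    exact ((hg.continuous_deriv.tendsto c).comp hadd).eventually_lt_const hc
  have hbot : Tendsto (conv k φ) atBot (𝓝 0) := hk.tendsto_conv hφ.measurable hφ.abs_le_one
    fun y ↦ hφ.tendsto_atBot.comp (tendsto_atBot_add_const_right _ (-y) tendsto_id)
  have htop : Tendsto (conv k φ) atTop (𝓝 1) := hk.tendsto_conv hφ.measurable hφ.abs_le_one
    fun y ↦ hφ.tendsto_atTop.comp (tendsto_atTop_add_const_right _ (-y) tendsto_id)
  rw [cocompact_eq_atBot_atTop, Filter.sup_prod, eventually_sup]
  exact ⟨near hbot h0, near htop h1⟩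

theorem exists_le_mul_deriv (hφ : IsFront k g φ) (hk : IsDispersalKernel k)
    (hg : IsStableReaction g) {s : Set ℝ} (hs : IsCompact s) (L : ℝ) :
    ∃ κ > 0, ∀ x ∈ s, L ≤ κ * deriv φ x := by
  obtain ⟨c, hc, hcs⟩ := hs.exists_forall_le' (hφ.contDiff.continuous_deriv le_rfl).continuousOn
    fun x _ ↦ hφ.deriv_pos hk hg x
  have hL : 0 < max L 1 := lt_max_of_lt_right one_pos
  refine ⟨max L 1 / c, div_pos hL hc, fun x hx ↦ ?_⟩
  calc L ≤ max L 1 := le_max_left L 1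
    _ = max L 1 / c * c := (div_mul_cancel₀ _ hc.ne').symm
    _ ≤ max L 1 / c * deriv φ x := by gcongr; exact hcs x hx

theorem exists_deriv_reaction_le (hφ : IsFront k g φ) (hk : IsDispersalKernel k)
    (hg : IsStableReaction g) :
    ∃ κ > 0, ∃ δ > 0, ∃ ρ ∈ Ioo (0 : ℝ) 1, ∀ y β, |β| ≤ δ →
      deriv g (conv k φ y + β) ≤ κ * deriv φ (y + κ * β) + ρ := by
  obtain ⟨ρ, hρ, hρ1⟩ := exists_between (max_lt hg.deriv_zero_lt_one hg.deriv_one_lt_one)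
  obtain ⟨h0ρ, h1ρ⟩ := max_lt_iff.1 hρ
  have hρ0 : 0 < ρ := hg.monotone.deriv_nonneg.trans_lt h0ρ
  obtain ⟨P, hP, Q, hQ, hPQ⟩ :=
    eventually_prod_iff.1 (hφ.eventually_deriv_reaction_lt hk hg h0ρ h1ρ)
  obtain ⟨s, hs, hsP⟩ := mem_cocompact.1 hP
  obtain ⟨ε, hε, hεQ⟩ := Metric.eventually_nhds_iff.1 hQ
  obtain ⟨L, hL⟩ := (isCompact_Icc (a := (-1 : ℝ)) (b := 2)).exists_bound_of_continuousOn
    hg.continuous_deriv.continuousOn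
  obtain ⟨κ, hκ, hκL⟩ := hφ.exists_le_mul_deriv hk hg (hs.cthickening (r := 1)) L
  refine ⟨κ, hκ, min (ε / 2) (min 1 (1 / κ)), by positivity, ρ, ⟨hρ0, hρ1⟩, fun y β hβ ↦ ?_⟩
  obtain ⟨hβε, hβ1, hβκ⟩ := by simpa only [le_min_iff] using hβ
  by_cases hy : y ∈ s
  · have hshift : y + κ * β ∈ Metric.cthickening 1 s := by
      refine Metric.mem_cthickening_of_dist_le _ y 1 s hy ?_
      rwa [Real.dist_eq, add_sub_cancel_left, abs_mul, abs_of_pos hκ, ← le_div_iff₀' hκ]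
    have hmem : conv k φ y + β ∈ Icc (-1 : ℝ) 2 := by
      obtain ⟨hconv0, hconv1⟩ := hφ.conv_mem_Icc hk y
      obtain ⟨hβ_lower, hβ_upper⟩ := abs_le.1 hβ1
      constructor <;> linarith
    linarith [hκL _ hshift, le_of_abs_le (hL _ hmem)]
  · have hlt := hPQ (hsP hy) (hεQ (y := β) (by rw [dist_zero_right, Real.norm_eq_abs]; linarith))
    linarith [mul_nonneg hκ.le (hφ.monotone.deriv_nonneg (x := y + κ * β))]

/-- The pair `φ (· ± κ β) ± ρ β` consists of a super- and a subsolution over one step of the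
recursion started from `φ ± β`, for every amplitude `β ∈ [0, δ]`: the error is contracted by the
factor `ρ` while the front is shifted by `κ β`. -/
structure IsBarrier (k g φ : ℝ → ℝ) (κ δ ρ : ℝ) : Prop where
  le_super : ∀ y, ∀ β ∈ Icc 0 δ, g (conv k φ y + β) ≤ φ (y + κ * β) + ρ * β
  sub_le : ∀ y, ∀ β ∈ Icc 0 δ, φ (y - κ * β) - ρ * β ≤ g (conv k φ y - β)

theorem exists_isBarrier (hφ : IsFront k g φ) (hk : IsDispersalKernel k)
    (hg : IsStableReaction g) :
    ∃ κ > 0, ∃ δ > 0, ∃ ρ ∈ Ioo (0 : ℝ) 1, IsBarrier k g φ κ δ ρ := by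
  obtain ⟨κ, hκ, δ, hδ, ρ, hρ, hle⟩ := hφ.exists_deriv_reaction_le hk hg
  let defect (y β : ℝ) : ℝ := φ (y + κ * β) + ρ * β - g (conv k φ y + β)
  have hderiv (y β : ℝ) : HasDerivAt (defect y)
      (κ * deriv φ (y + κ * β) + ρ - deriv g (conv k φ y + β)) β := by
    have hshift : HasDerivAt (fun β ↦ y + κ * β) κ β := by
      simpa only [mul_one] using ((hasDerivAt_id' β).const_mul κ).const_add y
    have hfront := (hφ.hasDerivAt (y + κ * β)).comp β hshift
    rw [mul_comm] at hfront
    have hlin : HasDerivAt (fun β ↦ ρ * β) ρ β := by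
      simpa only [mul_one] using (hasDerivAt_id' β).const_mul ρ
    exact (hfront.add hlin).sub ((hg.hasDerivAt _).comp_const_add _ β)
  have hmono (y : ℝ) : MonotoneOn (defect y) (Icc (-δ) δ) := by
    refine monotoneOn_of_hasDerivWithinAt_nonneg (convex_Icc _ _)
      (fun β _ ↦ (hderiv y β).continuousAt.continuousWithinAt)
      (fun β _ ↦ (hderiv y β).hasDerivWithinAt) fun β hβ ↦ sub_nonneg.2 (hle y β ?_)
    exact abs_le.2 (interior_subset hβ : β ∈ Icc (-δ) δ)
  have hzero (y : ℝ) : defect y 0 = 0 := by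
    simp only [defect, mul_zero, add_zero, ← hφ.eq_conv, sub_self]
  have h0 : (0 : ℝ) ∈ Icc (-δ) δ := ⟨neg_nonpos.2 hδ.le, hδ.le⟩
  refine ⟨κ, hκ, δ, hδ, ρ, hρ, fun y β hβ ↦ ?_, fun y β hβ ↦ ?_⟩
  · have := hmono y h0 ⟨h0.1.trans hβ.1, hβ.2⟩ hβ.1
    rw [hzero] at this
    exact sub_nonneg.1 this
  · have := hmono y ⟨neg_le_neg hβ.2, (neg_nonpos.2 hβ.1).trans h0.2⟩ h0 (neg_nonpos.2 hβ.1)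
    simp only [hzero, defect, mul_neg, ← sub_eq_add_neg] at this
    exact sub_nonpos.1 this

end IsFront

end Front

section Trapping

variable {q g φ : ℝ → ℝ} {ℓ a b β κ δ ρ : ℝ}

/-- The function `u` lies between two translates of `φ`, up to an error `β`. -/
def IsTrapped (φ : ℝ → ℝ) (a b β : ℝ) (u : ℝ → ℝ) : Prop :=
  ∀ x, φ (x + a) - β ≤ u x ∧ u x ≤ φ (x + b) + β

theorem IsFront.isTrapped_step (hφ : IsFront (qshift q ℓ) g φ) (hq : IsDispersalKernel q)
    (hg : Monotone g) (hbar : IsFront.IsBarrier (qshift q ℓ) g φ κ δ ρ) (hβ : β ∈ Icc 0 δ)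
    {u : ℝ → ℝ} (hu : Measurable u) (htrap : IsTrapped φ a b β u) :
    IsTrapped φ (a - ℓ - κ * β) (b - ℓ + κ * β) (ρ * β) fun x ↦ g (conv q u x) := by
  have hbdd (x : ℝ) : |u x| ≤ 1 + β := abs_le.2
    ⟨by linarith [(htrap x).1, (hφ.mem_Icc (x + a)).1],
      by linarith [(htrap x).2, (hφ.mem_Icc (x + b)).2]⟩
  have hshift (c : ℝ) : Measurable fun y ↦ φ (y + c) := hφ.measurable.comp (measurable_add_const c)
  have hconv (c s x : ℝ) :
      conv q (fun y ↦ φ (y + c) + s) x = conv (qshift q ℓ) φ (x + (c - ℓ)) + s := by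
    rw [hq.conv_add_const (hshift c) (fun y ↦ hφ.abs_le_one _), conv_comp_add_right, conv_qshift]
    congr 2
    ring
  have hbdd_shift (c s x : ℝ) : |φ (x + c) + s| ≤ 1 + |s| :=
    (abs_add_le _ _).trans (add_le_add_left (hφ.abs_le_one _) _)
  intro x
  constructor
  · have hlower : conv (qshift q ℓ) φ (x + (a - ℓ)) - β ≤ conv q u x := by
      rw [sub_eq_add_neg, ← hconv]
      exact hq.conv_le_conv ((hshift a).add_const _) hu (hbdd_shift a _) hbdd
        fun y _ ↦ (htrap (x - y)).1
    rw [← add_sub_assoc]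
    exact (hbar.sub_le _ β hβ).trans (hg hlower)
  · have hupper : conv q u x ≤ conv (qshift q ℓ) φ (x + (b - ℓ)) + β := by
      rw [← hconv]
      exact hq.conv_le_conv hu ((hshift b).add_const _) hbdd (hbdd_shift b _)
        fun y _ ↦ (htrap (x - y)).2
    rw [← add_assoc]
    exact (hg hupper).trans (hbar.le_super _ β hβ)

theorem IsFront.isTrapped_iterate {K : ℝ} (hφ : IsFront (qshift q ℓ) g φ)
    (hq : IsDispersalKernel q) (hg : Monotone g) (hρ : ρ ∈ Icc 0 1)
    (hbar : IsFront.IsBarrier (qshift q ℓ) g φ (K * (1 - ρ)) δ ρ) (hβ : β ∈ Icc 0 δ)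
    {w : ℕ → ℝ → ℝ} (hw : ∀ n, Measurable (w n))
    (hrec : ∀ n x, w (n + 1) x = g (conv q (w n) x)) (h0 : IsTrapped φ a b β (w 0)) (n : ℕ) :
    IsTrapped φ (-(n * ℓ) + (a - K * β * (1 - ρ ^ n))) (-(n * ℓ) + (b + K * β * (1 - ρ ^ n)))
      (β * ρ ^ n) (w n) := by
  induction n with
  | zero => simpa using h0
  | succ n ih =>
    have hβn : β * ρ ^ n ∈ Icc 0 δ := ⟨mul_nonneg hβ.1 (pow_nonneg hρ.1 n),
      (mul_le_of_le_one_right hβ.1 (pow_le_one₀ hρ.1 hρ.2)).trans hβ.2⟩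
    rw [funext (hrec n)]
    convert hφ.isTrapped_step hq hg hbar hβn (hw n) ih using 1 <;> push_cast <;> ring

theorem traveling_wave_trapping_general (hq : IsDispersalKernel q) (hg : IsStableReaction g)
    (hφ : IsFront (qshift q ℓ) g φ) :
    ∃ K δ₀ r₀ : ℝ, 0 < K ∧ 0 < δ₀ ∧ 0 < r₀ ∧
      ∀ (ξm ξp β₀ : ℝ) (w : ℕ → ℝ → ℝ), 0 ≤ β₀ → β₀ ≤ δ₀ → (∀ n, Measurable (w n)) →
        (∀ (n : ℕ) (x : ℝ), w (n + 1) x = g (conv q (w n) x)) →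
        (∀ x : ℝ, φ (x + ξm) - β₀ ≤ w 0 x ∧ w 0 x ≤ φ (x + ξp) + β₀) →
        ∀ (n : ℕ) (x : ℝ),
          φ (x - n * ℓ + (ξm - K * β₀ * (1 - Real.exp (-r₀ * n))))
              - β₀ * Real.exp (-r₀ * n) ≤ w n x ∧
          w n x ≤ φ (x - n * ℓ + (ξp + K * β₀ * (1 - Real.exp (-r₀ * n))))
              + β₀ * Real.exp (-r₀ * n) := by
  obtain ⟨κ, hκ, δ, hδ, ρ, hρ, hbar⟩ := hφ.exists_isBarrier (hq.qshift ℓ) hg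
  have h1ρ : 0 < 1 - ρ := sub_pos.2 hρ.2
  rw [← div_mul_cancel₀ κ h1ρ.ne'] at hbar
  refine ⟨κ / (1 - ρ), δ, -Real.log ρ, div_pos hκ h1ρ, hδ, neg_pos.2 (Real.log_neg hρ.1 hρ.2), ?_⟩
  intro ξm ξp β₀ w hβ₀ hβδ hw hrec h0 n x
  have hexp : Real.exp (-(-Real.log ρ) * n) = ρ ^ n := by
    rw [neg_neg, mul_comm, Real.exp_nat_mul, Real.exp_log hρ.1]
  simp only [hexp, sub_eq_add_neg x, add_assoc]
  exact hφ.isTrapped_iterate hq hg.monotone (Ioo_subset_Icc_self hρ) hbar ⟨hβ₀, hβδ⟩ hw hrec h0 n x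

end Trapping

namespace BistableSetting

theorem isDispersalKernel (S : BistableSetting) : IsDispersalKernel S.q :=
  ⟨S.hq_diff.continuous, S.hq_supp, S.hq_nonneg, S.hq_int⟩

/-- The derivative of the nonlinearity `g`: that of `P`, frozen outside `[0, 1]`. -/
noncomputable def g' (S : BistableSetting) (x : ℝ) : ℝ :=
  S.P.derivative.eval (projIcc 0 1 zero_le_one x : ℝ)

theorem g'_eq (S : BistableSetting) {x : ℝ} (hx : x ∈ Icc 0 1) :
    S.g' x = S.P.derivative.eval x := by
  rw [g', projIcc_of_mem _ hx]

theorem continuous_g' (S : BistableSetting) : Continuous S.g' :=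
  S.P.derivative.continuous.comp (continuous_subtype_val.comp continuous_projIcc)

theorem g'_nonneg (S : BistableSetting) (x : ℝ) : 0 ≤ S.g' x := by
  have hclosed : IsClosed {y | 0 ≤ S.P.derivative.eval y} :=
    isClosed_le continuous_const S.P.derivative.continuous
  refine closure_minimal (fun y hy ↦ (S.hP_mono y hy).le) hclosed ?_
  rw [closure_Ioo zero_ne_one]
  exact (projIcc 0 1 zero_le_one x).2

theorem hasDerivAt_g (S : BistableSetting) (x : ℝ) : HasDerivAt S.g (S.g' x) x := by
  have hleft (x : ℝ) : HasDerivAt (fun x ↦ S.P.derivative.eval 0 * x)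
      (S.P.derivative.eval 0) x := by
    simpa only [mul_one] using (hasDerivAt_id' x).const_mul _
  have hright (x : ℝ) : HasDerivAt (fun x ↦ 1 + S.P.derivative.eval 1 * (x - 1))
      (S.P.derivative.eval 1) x := by
    simpa only [mul_one] using (((hasDerivAt_id' x).sub_const 1).const_mul _).const_add 1
  have frontier_zero : frontier {x : ℝ | x < 0} = {0} := frontier_Iio
  have frontier_one : frontier {x : ℝ | x ≤ 1} = {1} := frontier_Iic
  have hg' : S.g' x = if x < 0 then S.P.derivative.eval 0 else
      if x ≤ 1 then S.P.derivative.eval x else S.P.derivative.eval 1 := by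
    split_ifs with h0 h1
    · rw [g', projIcc_of_le_left _ h0.le]
    · exact S.g'_eq ⟨not_lt.1 h0, h1⟩
    · rw [g', projIcc_of_right_le _ (not_le.1 h1).le]
  rw [hg']
  refine hasDerivAt_ite hleft (hasDerivAt_ite S.P.hasDerivAt hright ?_ ?_) ?_ ?_ x
  · simp [frontier_one, S.hP1]
  · simp [frontier_one]
  · simp [frontier_zero, S.hP0]
  · simp [frontier_zero]

theorem isStableReaction (S : BistableSetting) : IsStableReaction S.g := by
  have hderiv : deriv S.g = S.g' := funext fun x ↦ (S.hasDerivAt_g x).deriv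
  have hdiff : Differentiable ℝ S.g := fun x ↦ (S.hasDerivAt_g x).differentiableAt
  refine ⟨contDiff_one_iff_deriv.2 ⟨hdiff, hderiv ▸ S.continuous_g'⟩,
    monotone_of_deriv_nonneg hdiff (hderiv ▸ S.g'_nonneg), ?_, ?_, fun s hs ↦ ?_, ?_, ?_⟩
  · simp [g, S.hP0]
  · simp [g, S.hP1]
  · rw [hderiv, S.g'_eq (Ioo_subset_Icc_self hs)]
    exact S.hP_mono s hs
  · rw [hderiv, S.g'_eq (left_mem_Icc.2 zero_le_one)]
    exact S.hf'0
  · rw [hderiv, S.g'_eq (right_mem_Icc.2 zero_le_one)]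
    exact S.hf'1

end BistableSetting

theorem IsTravelingWave.isFront {S : BistableSetting} {ℓ : ℝ} {φ : ℝ → ℝ}
    (h : IsTravelingWave S ℓ φ) : IsFront (qshift S.q ℓ) S.g φ :=
  ⟨h.mono, h.smooth, h.wave_eq, h.limit_bot, h.limit_top⟩

/-- Stability of the traveling wave under the recursion `w_{n+1} = g(q * w_n)`: if the
initial condition is trapped between shifts of the wave up to an error `β₀ ≤ δ₀`, then the
solution remains trapped for all times, with exponentially decaying error and shifts moving
by at most `K β₀`. -/
theorem traveling_wave_trapping (S : BistableSetting) (ℓ : ℝ) (φ : ℝ → ℝ)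
    (h : IsTravelingWave S ℓ φ) :
    ∃ K δ₀ r₀ : ℝ, 0 < K ∧ 0 < δ₀ ∧ 0 < r₀ ∧
      ∀ (ξm ξp β₀ : ℝ) (w : ℕ → ℝ → ℝ),
        0 ≤ β₀ → β₀ ≤ δ₀ →
        (∀ n, Measurable (w n)) → (∀ n, ∃ C, ∀ x, |w n x| ≤ C) →
        (∀ (n : ℕ) (x : ℝ), w (n + 1) x = S.g (conv S.q (w n) x)) →
        (∀ x : ℝ, φ (x + ξm) - β₀ ≤ w 0 x ∧ w 0 x ≤ φ (x + ξp) + β₀) →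
        ∀ (n : ℕ), 1 ≤ n → ∀ x : ℝ,
          φ (x - n * ℓ + (ξm - K * β₀ * (1 - Real.exp (-r₀ * n))))
              - β₀ * Real.exp (-r₀ * n) ≤ w n x ∧
          w n x ≤ φ (x - n * ℓ + (ξp + K * β₀ * (1 - Real.exp (-r₀ * n))))
              + β₀ * Real.exp (-r₀ * n) := by
  obtain ⟨K, δ₀, r₀, hK, hδ₀, hr₀, htrap⟩ :=
    traveling_wave_trapping_general S.isDispersalKernel S.isStableReaction h.isFront
  exact ⟨K, δ₀, r₀, hK, hδ₀, hr₀, fun ξm ξp β₀ w hβ₀ hβδ hw _ hrec h0 n _ ↦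
    htrap ξm ξp β₀ w hβ₀ hβδ hw hrec h0 n⟩
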